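/- Let μ ∈ Lⁿ and 1 ≤ p < n be such that h = span(e₁,…,e_p) is a subalgebra of (ℂⁿ, μ). For ε ≠ 0 let f_ε ∈ GL(n,ℂ) be defined by f_ε(e_i) = (1+ε)e_i for i ≤ p and f_ε(e_l) = ε e_l for l > p. Then the limit μ₀ = lim_{ε→0} f_ε*μ exists in the space of alternating bilinear maps and is given by: μ₀(e_i,e_j) = μ(e_i,e_j) for i,j ≤ p; μ₀(e_i,e_l) = pr(μ(e_i,e_l)) for i ≤ p < l; μ₀(e_l,e_m) = 0 for l,m > p. Consequently μ₀ ∈ Lⁿ lies in the closure of O(μ), h is a subalgebra of (ℂⁿ, μ₀), and a = span(e_{p+1},…,e_n) is an abelian ideal of (ℂⁿ, μ₀), so that (ℂⁿ, μ₀) = h ⊕ a. -/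

import Mathlib

/-!
Let `P` be the projection onto `h` along `a`, let `Q = 1 - P`, and let `f_ε` act as `1 + ε` on `h`
and as `ε` on `a`. When `h` is a subalgebra, expanding `μ(f_ε X, f_ε Y)` in blocks gives
`f_ε*μ = μ₀ + ε μ - ε / (1 + ε) P μ(Q·, Q·)`, where
`μ₀(X, Y) = μ(PX, PY) + Q (μ(PX, QY) + μ(QX, PY))`. This identity is exact, so `f_ε*μ → μ₀`
uniformly on bounded sets. The limit is a Lie law because the Jacobi identity is a closed condition,
and its behaviour on `h` and `a` is read off the formula for `μ₀`.
-/

set_option synthInstance.maxHeartbeats 400000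
set_option maxHeartbeats 1000000

noncomputable section

abbrev E (n : ℕ) : Type := Fin n → ℂ

abbrev Bil (n : ℕ) : Type := E n →L[ℂ] E n →L[ℂ] E n

/-- A bilinear map is alternating. -/
def IsAlt {n : ℕ} (μ : Bil n) : Prop := ∀ X, μ X X = 0

/-- The Jacobi identity. -/
def Jacobi {n : ℕ} (μ : Bil n) : Prop :=
  ∀ X Y Z, μ X (μ Y Z) + μ Y (μ Z X) + μ Z (μ X Y) = 0

/-- `Lⁿ`, the set of Lie algebra laws on `ℂⁿ`. -/
def LieLaw (n : ℕ) : Set (Bil n) := {μ | IsAlt μ ∧ Jacobi μ}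

/-- The orbit of a law under the action `(f*μ)(X,Y) = f⁻¹(μ(f X, f Y))` of `GL(n,ℂ)`. -/
def orbit {n : ℕ} (μ : Bil n) : Set (Bil n) :=
  {ν | ∃ f : E n ≃L[ℂ] E n, ∀ X Y, ν X Y = f.symm (μ (f X) (f Y))}

/-- The Gerstenhaber trilinear product `(φ∘ψ)(X,Y,Z)`. -/
def circ {n : ℕ} (φ ψ : Bil n) (X Y Z : E n) : E n :=
  φ (ψ X Y) Z + φ (ψ Y Z) X + φ (ψ Z X) Y

/-- `Z²(μ,μ)`: alternating 2-cochains with `δ_μφ = μ∘φ + φ∘μ = 0`. -/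
def Z2 {n : ℕ} (μ : Bil n) : Set (Bil n) :=
  {φ | IsAlt φ ∧ ∀ X Y Z, circ μ φ X Y Z + circ φ μ X Y Z = 0}

/-- The coboundary `δ_μ g`, for `g` an endomorphism:
`(δ_μ g)(X,Y) = −g(μ(X,Y)) + μ(g X, Y) + μ(X, g Y)`. -/
def delta1 {n : ℕ} (μ : Bil n) (g : E n →L[ℂ] E n) : Bil n :=
  μ.comp g + (μ.flip.comp g).flip -
    (ContinuousLinearMap.compL ℂ (E n) (E n) (E n) g).comp μ

lemma delta1_apply {n : ℕ} (μ : Bil n) (g : E n →L[ℂ] E n) (X Y : E n) :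
    delta1 μ g X Y = -g (μ X Y) + μ (g X) Y + μ X (g Y) := by
  simp [delta1]; ring

/-- `B²(μ,μ)`, the set of coboundaries. -/
def B2 {n : ℕ} (μ : Bil n) : Set (Bil n) := Set.range (delta1 μ)

/-- `f*μ`, defined using `Ring.inverse` so that it is defined for any `f`
(it agrees with the natural action when `f` is invertible). -/
def conj {n : ℕ} (f : E n →L[ℂ] E n) (μ : Bil n) : Bil n :=
  (((((ContinuousLinearMap.compL ℂ (E n) (E n) (E n) (Ring.inverse f)).comp μ).flip).comp
    f).flip).comp f

lemma conj_apply {n : ℕ} (f : E n →L[ℂ] E n) (μ : Bil n) (X Y : E n) :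
    conj f μ X Y = Ring.inverse f (μ (f X) (f Y)) := rfl

open Filter Topology

/-- The span of the first `p` standard basis vectors of `ℂⁿ`. -/
def spanLow (n p : ℕ) : Submodule ℂ (E n) :=
  Submodule.span ℂ {x | ∃ i : Fin n, (i : ℕ) < p ∧ x = Pi.single i 1}

/-- The span of the last `n − p` standard basis vectors of `ℂⁿ`. -/
def spanHigh (n p : ℕ) : Submodule ℂ (E n) :=
  Submodule.span ℂ {x | ∃ i : Fin n, p ≤ (i : ℕ) ∧ x = Pi.single i 1}

/-- The Inönü–Wigner isomorphism `f_ε`: `f_ε(e_i) = (1+ε)e_i` for `i ≤ p`,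
`f_ε(e_l) = ε e_l` for `l > p`. -/
noncomputable def fIW (n p : ℕ) (ε : ℂ) : E n →L[ℂ] E n :=
  LinearMap.toContinuousLinearMap
    (LinearMap.pi fun i : Fin n =>
      (if (i : ℕ) < p then 1 + ε else ε) • LinearMap.proj i)

section LieLaws

variable {𝕜 V : Type*} [NontriviallyNormedField 𝕜] [NormedAddCommGroup V] [NormedSpace 𝕜 V]

/-- Lie algebra laws on a normed space `V`, for `V = ℂⁿ` the elements of `LieLaw n`. -/
def IsLieLaw (μ : V →L[𝕜] V →L[𝕜] V) : Prop :=
  (∀ X, μ X X = 0) ∧ ∀ X Y Z, μ X (μ Y Z) + μ Y (μ Z X) + μ Z (μ X Y) = 0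

/-- The orbit of `μ` under the continuous automorphisms of `V`, for `V = ℂⁿ` the set `orbit μ`. -/
def lawOrbit (μ : V →L[𝕜] V →L[𝕜] V) : Set (V →L[𝕜] V →L[𝕜] V) :=
  {ν | ∃ f : V ≃L[𝕜] V, ∀ X Y, ν X Y = f.symm (μ (f X) (f Y))}

/-- The transported law `f*μ`, for `V = ℂⁿ` the law `conj f μ`; it is `0` if `f` is not
invertible. -/
def transportLaw (f : V →L[𝕜] V) (μ : V →L[𝕜] V →L[𝕜] V) : V →L[𝕜] V →L[𝕜] V :=
  (ContinuousLinearMap.compL 𝕜 V V V (Ring.inverse f)).comp (μ.bilinearComp f f)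

lemma transportLaw_apply (f : V →L[𝕜] V) (μ : V →L[𝕜] V →L[𝕜] V) (X Y : V) :
    transportLaw f μ X Y = Ring.inverse f (μ (f X) (f Y)) := rfl

lemma ringInverse_apply_apply {f : V →L[𝕜] V} (hf : IsUnit f) (x : V) : Ring.inverse f (f x) = x :=
  DFunLike.congr_fun (Ring.inverse_mul_cancel f hf) x

lemma apply_ringInverse_apply {f : V →L[𝕜] V} (hf : IsUnit f) (x : V) : f (Ring.inverse f x) = x :=
  DFunLike.congr_fun (Ring.mul_inverse_cancel f hf) x

lemma transportLaw_eq_of_apply_eq {f : V →L[𝕜] V} (hf : IsUnit f) {μ ν : V →L[𝕜] V →L[𝕜] V}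
    (h : ∀ X Y, f (ν X Y) = μ (f X) (f Y)) : transportLaw f μ = ν := by
  ext X Y
  rw [transportLaw_apply, ← h, ringInverse_apply_apply hf]

lemma IsLieLaw.transportLaw {f : V →L[𝕜] V} (hf : IsUnit f) {μ : V →L[𝕜] V →L[𝕜] V}
    (hμ : IsLieLaw μ) : IsLieLaw (transportLaw f μ) := by
  refine ⟨fun X => ?_, fun X Y Z => ?_⟩
  · rw [transportLaw_apply, hμ.1, map_zero]
  · simp only [transportLaw_apply, apply_ringInverse_apply hf]
    rw [← map_add, ← map_add, hμ.2, map_zero]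

lemma transportLaw_mem_lawOrbit {f : V →L[𝕜] V} (hf : IsUnit f) (μ : V →L[𝕜] V →L[𝕜] V) :
    transportLaw f μ ∈ lawOrbit μ :=
  ⟨.equivOfInverse f (Ring.inverse f) (ringInverse_apply_apply hf) (apply_ringInverse_apply hf),
    fun _ _ => rfl⟩

lemma isClosed_setOf_isLieLaw : IsClosed {μ : V →L[𝕜] V →L[𝕜] V | IsLieLaw μ} := by
  simp only [IsLieLaw, Set.ofPred_and, Set.ofPred_forall]
  exact (isClosed_iInter fun X => isClosed_eq (by fun_prop) continuous_const).inter <|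
    isClosed_iInter fun X => isClosed_iInter fun Y => isClosed_iInter fun Z =>
      isClosed_eq (by fun_prop) continuous_const

end LieLaws

section Contraction

variable {𝕜 V : Type*} [NontriviallyNormedField 𝕜] [NormedAddCommGroup V] [NormedSpace 𝕜 V]
  {h a : Submodule 𝕜 V} (hc : h.IsTopCompl a)

/-- The endomorphism of `V = h ⊕ a` acting as `s` on `h` and as `t` on `a`. The Inönü–Wigner
isomorphism `f_ε` is the case `s = 1 + ε`, `t = ε`. -/
def blockScalar (s t : 𝕜) : V →L[𝕜] V :=
  s • h.projectionL a hc + t • a.projectionL h hc.symm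

lemma blockScalar_apply (s t : 𝕜) (x : V) :
    blockScalar hc s t x = s • h.projectionL a hc x + t • a.projectionL h hc.symm x := rfl

lemma projectionL_projectionL_symm (x : V) :
    h.projectionL a hc (a.projectionL h hc.symm x) = 0 :=
  Submodule.projectionL_apply_eq_zero_of_mem_right hc (Submodule.projectionL_apply_mem _ x)

lemma projectionL_projectionL (x : V) :
    h.projectionL a hc (h.projectionL a hc x) = h.projectionL a hc x :=
  (Submodule.projectionL_eq_self_iff hc _).2 (Submodule.projectionL_apply_mem hc x)

lemma blockScalar_mul_blockScalar (s t s' t' : 𝕜) :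
    blockScalar hc s t * blockScalar hc s' t' = blockScalar hc (s * s') (t * t') := by
  ext x
  simp only [mul_apply_eq_comp, blockScalar_apply, map_add, map_smul,
    projectionL_projectionL, projectionL_projectionL_symm, projectionL_projectionL_symm hc.symm]
  module

lemma blockScalar_one_one : blockScalar hc (1 : 𝕜) 1 = 1 := by
  ext x
  rw [blockScalar_apply, one_smul, one_smul, Submodule.projectionL_add_projectionL_eq_self,
    one_apply_eq_self]

lemma isUnit_blockScalar {s t : 𝕜} (hs : s ≠ 0) (ht : t ≠ 0) : IsUnit (blockScalar hc s t) := by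
  refine ⟨⟨blockScalar hc s t, blockScalar hc s⁻¹ t⁻¹, ?_, ?_⟩, rfl⟩ <;>
    simp [blockScalar_mul_blockScalar, blockScalar_one_one, hs, ht]

/-- The Inönü–Wigner contraction `μ₀(X, Y) = μ(PX, PY) + Q (μ(PX, QY) + μ(QX, PY))` of `μ` with
respect to `V = h ⊕ a`, where `P` and `Q` are the projections onto `h` and `a`. -/
def inonuWignerContraction (μ : V →L[𝕜] V →L[𝕜] V) : V →L[𝕜] V →L[𝕜] V :=
  letI P := h.projectionL a hc
  letI Q := a.projectionL h hc.symm
  μ.bilinearComp P P +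
    (ContinuousLinearMap.compL 𝕜 V V V Q).comp (μ.bilinearComp P Q + μ.bilinearComp Q P)

lemma inonuWignerContraction_apply (μ : V →L[𝕜] V →L[𝕜] V) (X Y : V) :
    inonuWignerContraction hc μ X Y =
      μ (h.projectionL a hc X) (h.projectionL a hc Y) +
        a.projectionL h hc.symm (μ (h.projectionL a hc X) (a.projectionL h hc.symm Y) +
          μ (a.projectionL h hc.symm X) (h.projectionL a hc Y)) := rfl

lemma inonuWignerContraction_eq_of_mem (μ : V →L[𝕜] V →L[𝕜] V) {X Y : V} (hX : X ∈ h)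
    (hY : Y ∈ h) : inonuWignerContraction hc μ X Y = μ X Y := by
  simp only [inonuWignerContraction_apply, (Submodule.projectionL_eq_self_iff hc _).2 hX,
    (Submodule.projectionL_eq_self_iff hc _).2 hY,
    (Submodule.projectionL_apply_eq_zero_iff hc.symm).2 hX,
    (Submodule.projectionL_apply_eq_zero_iff hc.symm).2 hY,
    map_zero, zero_apply, add_zero]

lemma inonuWignerContraction_of_right_mem_compl (μ : V →L[𝕜] V →L[𝕜] V) (X : V) {Y : V}
    (hY : Y ∈ a) :
    inonuWignerContraction hc μ X Y = a.projectionL h hc.symm (μ (h.projectionL a hc X) Y) := by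
  simp only [inonuWignerContraction_apply, (Submodule.projectionL_eq_self_iff hc.symm _).2 hY,
    (Submodule.projectionL_apply_eq_zero_iff hc).2 hY, map_zero, zero_add, add_zero]

lemma inonuWignerContraction_of_left_mem_compl (μ : V →L[𝕜] V →L[𝕜] V) {X : V} (hX : X ∈ a)
    (Y : V) :
    inonuWignerContraction hc μ X Y = a.projectionL h hc.symm (μ X (h.projectionL a hc Y)) := by
  simp only [inonuWignerContraction_apply, (Submodule.projectionL_eq_self_iff hc.symm _).2 hX,
    (Submodule.projectionL_apply_eq_zero_iff hc).2 hX, map_zero, zero_apply, zero_add]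

lemma transportLaw_blockScalar {μ : V →L[𝕜] V →L[𝕜] V} (hsub : ∀ X ∈ h, ∀ Y ∈ h, μ X Y ∈ h)
    {ε : 𝕜} (hε : ε ≠ 0) (hε' : 1 + ε ≠ 0) :
    transportLaw (blockScalar hc (1 + ε) ε) μ =
      inonuWignerContraction hc μ + ε • μ - (ε / (1 + ε)) •
        (ContinuousLinearMap.compL 𝕜 V V V (h.projectionL a hc)).comp
          (μ.bilinearComp (a.projectionL h hc.symm) (a.projectionL h hc.symm)) := by
  refine transportLaw_eq_of_apply_eq (isUnit_blockScalar hc hε' hε) fun X Y => ?_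
  set P := h.projectionL a hc
  set Q := a.projectionL h hc.symm
  have hblock (x : V) : blockScalar hc (1 + ε) ε x = (1 + ε) • P x + ε • Q x := rfl
  have hcontraction : inonuWignerContraction hc μ X Y =
      μ (P X) (P Y) + Q (μ (P X) (Q Y) + μ (Q X) (P Y)) := rfl
  have hQ (x : V) : Q x = x - P x := Submodule.projectionL_eq_self_sub_projectionL hc x
  have hPP (x : V) : P (P x) = P x := projectionL_projectionL hc x
  have hPμ : P (μ (P X) (P Y)) = μ (P X) (P Y) :=
    (Submodule.projectionL_eq_self_iff hc _).2 <|
      hsub _ (Submodule.projectionL_apply_mem hc X) _ (Submodule.projectionL_apply_mem hc Y)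
  simp only [hblock, hcontraction, add_apply, sub_apply, smul_apply,
    ContinuousLinearMap.comp_apply, ContinuousLinearMap.compL_apply,
    ContinuousLinearMap.bilinearComp_apply, hQ, hPP, hPμ, map_add, map_sub, map_smul]
  match_scalars <;> field_simp <;> ring

lemma eventually_ne_zero_and_one_add_ne_zero :
    ∀ᶠ ε : 𝕜 in 𝓝[≠] 0, ε ≠ 0 ∧ 1 + ε ≠ 0 := by
  have hne : ∀ᶠ ε : 𝕜 in 𝓝 0, 1 + ε ≠ 0 :=
    ContinuousAt.eventually_ne (by fun_prop) (by simp)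
  exact eventually_mem_nhdsWithin.and (hne.filter_mono nhdsWithin_le_nhds)

lemma eventually_isUnit_blockScalar :
    ∀ᶠ ε : 𝕜 in 𝓝[≠] 0, IsUnit (blockScalar hc (1 + ε) ε) :=
  eventually_ne_zero_and_one_add_ne_zero.mono fun _ hε => isUnit_blockScalar hc hε.2 hε.1

lemma tendsto_transportLaw_blockScalar {μ : V →L[𝕜] V →L[𝕜] V}
    (hsub : ∀ X ∈ h, ∀ Y ∈ h, μ X Y ∈ h) :
    Tendsto (fun ε : 𝕜 => transportLaw (blockScalar hc (1 + ε) ε) μ) (𝓝[≠] 0)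
      (𝓝 (inonuWignerContraction hc μ)) := by
  set R := (ContinuousLinearMap.compL 𝕜 V V V (h.projectionL a hc)).comp
    (μ.bilinearComp (a.projectionL h hc.symm) (a.projectionL h hc.symm))
  have hcont : ContinuousAt
      (fun ε : 𝕜 => inonuWignerContraction hc μ + ε • μ - (ε / (1 + ε)) • R) 0 := by
    have : ContinuousAt (fun ε : 𝕜 => ε / (1 + ε)) 0 :=
      continuousAt_id.div (by fun_prop) (by simp)
    fun_prop
  have hval : inonuWignerContraction hc μ =
      inonuWignerContraction hc μ + (0 : 𝕜) • μ - ((0 : 𝕜) / (1 + 0)) • R := by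
    ext X Y
    simp
  rw [hval]
  refine (hcont.tendsto.mono_left nhdsWithin_le_nhds).congr' ?_
  filter_upwards [eventually_ne_zero_and_one_add_ne_zero] with ε hε
  exact (transportLaw_blockScalar hc hsub hε.1 hε.2).symm

theorem stmt9_general {μ : V →L[𝕜] V →L[𝕜] V} (hμ : IsLieLaw μ)
    (hsub : ∀ X ∈ h, ∀ Y ∈ h, μ X Y ∈ h) :
    (∀ᶠ ε : 𝕜 in 𝓝[≠] 0, IsUnit (blockScalar hc (1 + ε) ε)) ∧
    Tendsto (fun ε : 𝕜 => transportLaw (blockScalar hc (1 + ε) ε) μ) (𝓝[≠] 0)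
      (𝓝 (inonuWignerContraction hc μ)) ∧
    IsLieLaw (inonuWignerContraction hc μ) ∧
    inonuWignerContraction hc μ ∈ closure (lawOrbit μ) ∧
    (∀ X ∈ h, ∀ Y ∈ h, inonuWignerContraction hc μ X Y ∈ h) ∧
    (∀ X, ∀ Y ∈ a, inonuWignerContraction hc μ X Y ∈ a) ∧
    (∀ X ∈ a, ∀ Y ∈ a, inonuWignerContraction hc μ X Y = 0) := by
  have hunit := eventually_isUnit_blockScalar hc
  have hlim := tendsto_transportLaw_blockScalar hc hsub
  refine ⟨hunit, hlim, ?_, ?_, fun X hX Y hY => ?_, fun X Y hY => ?_, fun X hX Y hY => ?_⟩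
  · exact isClosed_setOf_isLieLaw.mem_of_tendsto hlim (hunit.mono fun _ hf => hμ.transportLaw hf)
  · exact mem_closure_of_tendsto hlim (hunit.mono fun _ hf => transportLaw_mem_lawOrbit hf μ)
  · rw [inonuWignerContraction_eq_of_mem hc μ hX hY]
    exact hsub X hX Y hY
  · rw [inonuWignerContraction_of_right_mem_compl hc μ X hY]
    exact Submodule.projectionL_apply_mem _ _
  · rw [inonuWignerContraction_of_right_mem_compl hc μ X hY,
      (Submodule.projectionL_apply_eq_zero_iff hc).2 hX, map_zero, zero_apply, map_zero]

end Contraction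

section CoordinateSubspaces

lemma isCompl_span_image_compl {ι R M : Type*} [Ring R] [AddCommGroup M] [Module R M]
    (b : Module.Basis ι R M) (s : Set ι) :
    IsCompl (Submodule.span R (b '' s)) (Submodule.span R (b '' sᶜ)) where
  disjoint := b.linearIndependent.disjoint_span_image disjoint_compl_right
  codisjoint := by
    rw [codisjoint_iff, ← Submodule.span_union, ← Set.image_union, Set.union_compl_self,
      Set.image_univ, b.span_eq]

lemma projectionL_eq_indicator {ι R : Type*} [Ring R] [TopologicalSpace R]
    [IsTopologicalAddGroup R] {h a : Submodule R (ι → R)} (hc : h.IsTopCompl a) {s : Set ι}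
    (hh : ∀ x ∈ h, ∀ k ∉ s, x k = 0) (ha : ∀ x ∈ a, ∀ k ∈ s, x k = 0) (x : ι → R) :
    h.projectionL a hc x = s.indicator x := by
  ext k
  by_cases hk : k ∈ s
  · rw [Set.indicator_of_mem hk,
      ← congrFun (Submodule.projectionL_add_projectionL_eq_self hc x) k, Pi.add_apply,
      ha _ (Submodule.projectionL_apply_mem hc.symm x) k hk, add_zero]
  · rw [Set.indicator_of_notMem hk, hh _ (Submodule.projectionL_apply_mem hc x) k hk]

lemma apply_eq_zero_of_mem_span_single {ι R : Type*} [Semiring R] [DecidableEq ι] {q : ι → Prop}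
    {x : ι → R} (hx : x ∈ Submodule.span R {x | ∃ i, q i ∧ x = Pi.single i 1}) {k : ι}
    (hk : ¬ q k) : x k = 0 := by
  have hle : Submodule.span R {x | ∃ i, q i ∧ x = Pi.single i 1} ≤
      LinearMap.ker (LinearMap.proj k : (ι → R) →ₗ[R] R) := by
    refine Submodule.span_le.2 ?_
    rintro _ ⟨i, hi, rfl⟩
    exact Pi.single_eq_of_ne (by rintro rfl; exact hk hi) _
  exact hle hx

variable {n p : ℕ}

lemma single_mem_spanLow {i : Fin n} (hi : (i : ℕ) < p) : Pi.single i 1 ∈ spanLow n p :=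
  Submodule.subset_span ⟨i, hi, rfl⟩

lemma single_mem_spanHigh {i : Fin n} (hi : p ≤ (i : ℕ)) : Pi.single i 1 ∈ spanHigh n p :=
  Submodule.subset_span ⟨i, hi, rfl⟩

lemma isTopCompl_spanLow_spanHigh (n p : ℕ) : (spanLow n p).IsTopCompl (spanHigh n p) := by
  have hcompl : IsCompl (spanLow n p) (spanHigh n p) := by
    convert isCompl_span_image_compl (Pi.basisFun ℂ (Fin n)) {i | (i : ℕ) < p} using 1 <;>
      simp [spanLow, spanHigh, Set.image, eq_comm]
  exact ⟨hcompl, LinearMap.continuous_of_finiteDimensional _⟩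

lemma projectionL_spanLow_apply (hc : (spanLow n p).IsTopCompl (spanHigh n p)) (x : E n)
    (k : Fin n) :
    (spanLow n p).projectionL (spanHigh n p) hc x k = if (k : ℕ) < p then x k else 0 := by
  rw [projectionL_eq_indicator (s := {k | (k : ℕ) < p}) hc
    (fun _ hx _ hk => apply_eq_zero_of_mem_span_single hx hk)
    (fun _ hx _ hk => apply_eq_zero_of_mem_span_single hx (not_le.2 hk)), Set.indicator_apply]
  simp only [Set.mem_ofPred_eq]

lemma projectionL_spanHigh_apply (hc : (spanLow n p).IsTopCompl (spanHigh n p)) (x : E n)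
    (k : Fin n) :
    (spanHigh n p).projectionL (spanLow n p) hc.symm x k = if p ≤ (k : ℕ) then x k else 0 := by
  rw [Submodule.projectionL_eq_self_sub_projectionL hc, Pi.sub_apply, projectionL_spanLow_apply hc]
  split_ifs <;> first | omega | simp

lemma fIW_eq_blockScalar (hc : (spanLow n p).IsTopCompl (spanHigh n p)) (ε : ℂ) :
    fIW n p ε = blockScalar hc (1 + ε) ε := by
  ext x k
  change (if (k : ℕ) < p then 1 + ε else ε) * x k =
    (1 + ε) * (spanLow n p).projectionL (spanHigh n p) hc x k +
      ε * (spanHigh n p).projectionL (spanLow n p) hc.symm x k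
  rw [projectionL_spanLow_apply hc, projectionL_spanHigh_apply hc]
  split_ifs <;> first | omega | simp

lemma eq_inonuWignerContraction_of_single (hc : (spanLow n p).IsTopCompl (spanHigh n p))
    {μ μ₀ : Bil n}
    (hlow : ∀ i j : Fin n, (i : ℕ) < p → (j : ℕ) < p →
      μ₀ (Pi.single i 1) (Pi.single j 1) = μ (Pi.single i 1) (Pi.single j 1))
    (hlowHigh : ∀ i l : Fin n, (i : ℕ) < p → p ≤ (l : ℕ) →
      μ₀ (Pi.single i 1) (Pi.single l 1) =
        fun m : Fin n => if p ≤ (m : ℕ) then μ (Pi.single i 1) (Pi.single l 1) m else 0)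
    (hhighLow : ∀ i l : Fin n, (i : ℕ) < p → p ≤ (l : ℕ) →
      μ₀ (Pi.single l 1) (Pi.single i 1) =
        fun m : Fin n => if p ≤ (m : ℕ) then μ (Pi.single l 1) (Pi.single i 1) m else 0)
    (hhigh : ∀ l m : Fin n, p ≤ (l : ℕ) → p ≤ (m : ℕ) →
      μ₀ (Pi.single l 1) (Pi.single m 1) = 0) :
    μ₀ = inonuWignerContraction hc μ := by
  have hPlow {i : Fin n} (hi : (i : ℕ) < p) :
      (spanLow n p).projectionL (spanHigh n p) hc (Pi.single i 1) = Pi.single i 1 :=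
    (Submodule.projectionL_eq_self_iff hc _).2 (single_mem_spanLow hi)
  have hPhigh {i : Fin n} (hi : p ≤ (i : ℕ)) :
      (spanLow n p).projectionL (spanHigh n p) hc (Pi.single i 1) = 0 :=
    (Submodule.projectionL_apply_eq_zero_iff hc).2 (single_mem_spanHigh hi)
  have hsingle (i j : Fin n) : μ₀ (Pi.single i 1) (Pi.single j 1) =
      inonuWignerContraction hc μ (Pi.single i 1) (Pi.single j 1) := by
    rcases lt_or_ge (i : ℕ) p with hi | hi <;> rcases lt_or_ge (j : ℕ) p with hj | hj
    · rw [hlow i j hi hj, inonuWignerContraction_eq_of_mem hc μ (single_mem_spanLow hi)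
        (single_mem_spanLow hj)]
    · rw [hlowHigh i j hi hj, inonuWignerContraction_of_right_mem_compl hc μ _
        (single_mem_spanHigh hj), hPlow hi]
      exact funext fun k => (projectionL_spanHigh_apply hc _ k).symm
    · rw [hhighLow j i hj hi, inonuWignerContraction_of_left_mem_compl hc μ
        (single_mem_spanHigh hi), hPlow hj]
      exact funext fun k => (projectionL_spanHigh_apply hc _ k).symm
    · rw [hhigh i j hi hj, inonuWignerContraction_of_right_mem_compl hc μ _
        (single_mem_spanHigh hj), hPhigh hi, map_zero, zero_apply, map_zero]
  refine ContinuousLinearMap.coe_injective <| (Pi.basisFun ℂ (Fin n)).ext fun i =>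
    ContinuousLinearMap.coe_injective <| (Pi.basisFun ℂ (Fin n)).ext fun j => ?_
  simpa using hsingle i j

lemma conj_eq_transportLaw (f : E n →L[ℂ] E n) (μ : Bil n) : conj f μ = transportLaw f μ := rfl

end CoordinateSubspaces

/-- the Inönü–Wigner contraction of `μ` with respect to the subalgebra
spanned by `e₁,…,e_p`. -/
theorem stmt9 (n p : ℕ) (hp1 : 1 ≤ p) (hpn : p < n) (μ : Bil n) (hμ : μ ∈ LieLaw n)
    (hsub : ∀ X ∈ spanLow n p, ∀ Y ∈ spanLow n p, μ X Y ∈ spanLow n p)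
    (μ₀ : Bil n)
    (h1 : ∀ i j : Fin n, (i : ℕ) < p → (j : ℕ) < p →
      μ₀ (Pi.single i 1) (Pi.single j 1) = μ (Pi.single i 1) (Pi.single j 1))
    (h2 : ∀ i l : Fin n, (i : ℕ) < p → p ≤ (l : ℕ) →
      μ₀ (Pi.single i 1) (Pi.single l 1) =
        fun m : Fin n => if p ≤ (m : ℕ) then μ (Pi.single i 1) (Pi.single l 1) m else 0)
    (h2' : ∀ i l : Fin n, (i : ℕ) < p → p ≤ (l : ℕ) →
      μ₀ (Pi.single l 1) (Pi.single i 1) =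
        fun m : Fin n => if p ≤ (m : ℕ) then μ (Pi.single l 1) (Pi.single i 1) m else 0)
    (h3 : ∀ l m : Fin n, p ≤ (l : ℕ) → p ≤ (m : ℕ) →
      μ₀ (Pi.single l 1) (Pi.single m 1) = 0) :
    (∀ᶠ ε : ℂ in 𝓝[≠] (0 : ℂ), IsUnit (fIW n p ε)) ∧
    Tendsto (fun ε : ℂ => conj (fIW n p ε) μ) (𝓝[≠] (0 : ℂ)) (𝓝 μ₀) ∧
    μ₀ ∈ LieLaw n ∧ μ₀ ∈ closure (orbit μ) ∧
    (∀ X ∈ spanLow n p, ∀ Y ∈ spanLow n p, μ₀ X Y ∈ spanLow n p) ∧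
    (∀ X : E n, ∀ Y ∈ spanHigh n p, μ₀ X Y ∈ spanHigh n p) ∧
    (∀ X ∈ spanHigh n p, ∀ Y ∈ spanHigh n p, μ₀ X Y = 0) ∧
    IsCompl (spanLow n p) (spanHigh n p) := by
  have hc := isTopCompl_spanLow_spanHigh n p
  obtain rfl := eq_inonuWignerContraction_of_single hc h1 h2 h2' h3
  simp only [fIW_eq_blockScalar hc, conj_eq_transportLaw, hc.isCompl, and_true]
  exact stmt9_general hc hμ hsub
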